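/- arXiv:1202.0909 — 3 statements merged into one kernel-verified Lean document; each statement's English description precedes it below -/
import Mathlib

section
/- Let d ≥ 2 be an integer. Let (M_n(1),…,M_n(m)) be the occupancy counts of the uniform occupancy model with n balls and m urns, and for i ≠ j define b_{n,m}(i,j) = [C(n−d, d)·C(d−M_n(i), M_n(j)−d) / C(n−M_n(i), M_n(j))] · 1{M_n(i)+M_n(j) ≤ 2d, M_n(j) > d}. Then there exist an integer n₁, a real r₁ > 0, and a constant C, all depending only on d, such that for all n ≥ n₁ and all m ≥ 2 with r_{n,m} ≥ r₁, Var(Σ_{1 ≤ i,j ≤ m, i≠j} b_{n,m}(i,j)) ≤ C·m²/n. -/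
open MeasureTheory ProbabilityTheory

/-- The uniform occupancy model: `n` balls are placed independently and uniformly at
random into `m` urns. -/
noncomputable def occ (n m : ℕ) : Measure (Fin n → Fin m) :=
  (Fintype.card (Fin n → Fin m) : ENNReal)⁻¹ • Measure.count

/-- The number of balls in urn `i`. -/
def ballCount {n m : ℕ} (ω : Fin n → Fin m) (i : Fin m) : ℕ :=
  (Finset.univ.filter fun b => ω b = i).card

/-- The number of urns containing exactly `d` balls. -/
def urnCount (d : ℕ) {n m : ℕ} (ω : Fin n → Fin m) : ℕ :=
  (Finset.univ.filter fun i => ballCount ω i = d).card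

/-- `μ_{n,m}`, the mean number of urns containing exactly `d` balls. -/
noncomputable def occMean (d n m : ℕ) : ℝ :=
  ∫ ω, (urnCount d ω : ℝ) ∂(occ n m)


/-- `σ²_{n,m}`, the variance of the number of urns containing exactly `d` balls. -/
noncomputable def occVar (d n m : ℕ) : ℝ :=
  variance (fun ω => (urnCount d ω : ℝ)) (occ n m)

/-- `r_{n,m} = σ_{n,m} / (1 + (n/m)³)`. -/
noncomputable def occR (d n m : ℕ) : ℝ :=
  Real.sqrt (occVar d n m) / (1 + ((n : ℝ) / m) ^ 3)

/-- The summand `b_{n,m}(i,j)` of Lemma 3.3, Equation (3.15). -/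
noncomputable def bTerm (d n m : ℕ) (ω : Fin n → Fin m) (i j : Fin m) : ℝ :=
  if ballCount ω i + ballCount ω j ≤ 2 * d ∧ d < ballCount ω j then
    ((n - d).choose d : ℝ) * ((d - ballCount ω i).choose (ballCount ω j - d) : ℝ)
      / ((n - ballCount ω i).choose (ballCount ω j) : ℝ)
  else 0

/-- Bounded differences control the mean squared deviation from some constant, uniformly over a
finite power of a finite type. -/
theorem exists_sum_sq_sub_le_of_bounded_diff {α : Type*} [Fintype α] [Nonempty α] (n : ℕ) (c : ℝ)
    (f : (Fin n → α) → ℝ)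
    (hf : ∀ (ω : Fin n → α) (b : Fin n) (x : α), |f (Function.update ω b x) - f ω| ≤ c) :
    ∃ a : ℝ, ∑ ω, (f ω - a) ^ 2 ≤ (Fintype.card α : ℝ) ^ n * (n * c ^ 2) := by
  induction n with
  | zero => exact ⟨f default, by simp [Subsingleton.elim _ (default : Fin 0 → α)]⟩
  | succ n ih =>
    have hcard : (0 : ℝ) < Fintype.card α := by exact_mod_cast Fintype.card_pos
    set q : ℝ := (Fintype.card α : ℝ) with hq
    let g : (Fin n → α) → ℝ := fun ω => (∑ x, f (Fin.cons x ω)) / q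
    have hg (ω : Fin n → α) : ∑ x, f (Fin.cons x ω) = q * g ω := by
      simp only [g]; field_simp
    have avg_le (u : α → ℝ) (hu : ∀ x, |u x| ≤ c) : |(∑ x, u x) / q| ≤ c := by
      rw [abs_div, abs_of_pos hcard, div_le_iff₀ hcard]
      calc |∑ x, u x| ≤ ∑ x, |u x| := Finset.abs_sum_le_sum_abs _ _
        _ ≤ ∑ _x : α, c := Finset.sum_le_sum fun x _ => hu x
        _ = c * q := by simp [hq, mul_comm]
    obtain ⟨a, ha⟩ := ih g fun ω b x => by
      have : g (Function.update ω b x) - g ω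
          = (∑ y, (f (Fin.cons y (Function.update ω b x)) - f (Fin.cons y ω))) / q := by
        simp only [g, Finset.sum_sub_distrib, sub_div]
      rw [this]
      refine avg_le _ fun y => ?_
      rw [Fin.cons_update]
      exact hf _ _ _
    have hdev (ω : Fin n → α) (x : α) : |f (Fin.cons x ω) - g ω| ≤ c := by
      have : f (Fin.cons x ω) - g ω
          = (∑ y, (f (Fin.cons x ω) - f (Fin.cons y ω))) / q := by
        simp only [g, Finset.sum_sub_distrib, sub_div, Finset.sum_const, Finset.card_univ,
          nsmul_eq_mul, ← hq]
        field_simp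
      rw [this]
      refine avg_le _ fun y => ?_
      have := hf (Fin.cons y ω) 0 x
      rwa [Fin.update_cons_zero] at this
    refine ⟨a, ?_⟩
    have hfiber (ω : Fin n → α) :
        ∑ x, (f (Fin.cons x ω) - a) ^ 2 ≤ q * c ^ 2 + q * (g ω - a) ^ 2 := by
      have hsplit : ∑ x, (f (Fin.cons x ω) - a) ^ 2
          = ∑ x, (f (Fin.cons x ω) - g ω) ^ 2 + q * (g ω - a) ^ 2 := by
        have expand (x : α) : (f (Fin.cons x ω) - a) ^ 2 = (f (Fin.cons x ω) - g ω) ^ 2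
            + (2 * (g ω - a) * f (Fin.cons x ω) - 2 * (g ω - a) * g ω + (g ω - a) ^ 2) := by
          ring
        simp only [expand, Finset.sum_add_distrib, Finset.sum_sub_distrib, ← Finset.mul_sum, hg,
          Finset.sum_const, Finset.card_univ, nsmul_eq_mul, ← hq]
        ring
      rw [hsplit]
      gcongr
      calc ∑ x, (f (Fin.cons x ω) - g ω) ^ 2 ≤ ∑ _x : α, c ^ 2 :=
            Finset.sum_le_sum fun x _ => sq_le_sq.2 ((hdev ω x).trans (le_abs_self c))
        _ = q * c ^ 2 := by simp [hq]
    calc ∑ ω, (f ω - a) ^ 2 = ∑ ω : Fin n → α, ∑ x, (f (Fin.cons x ω) - a) ^ 2 := by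
          rw [← (Fin.consEquiv fun _ => α).sum_comp, Fintype.sum_prod_type_right]
          rfl
      _ ≤ ∑ ω : Fin n → α, (q * c ^ 2 + q * (g ω - a) ^ 2) :=
          Finset.sum_le_sum fun ω _ => hfiber ω
      _ = q ^ n * (q * c ^ 2) + q * ∑ ω, (g ω - a) ^ 2 := by
          simp [Finset.sum_add_distrib, Finset.mul_sum, hq]
      _ ≤ q ^ n * (q * c ^ 2) + q * (q ^ n * (n * c ^ 2)) := by gcongr
      _ = q ^ (n + 1) * ((n + 1 : ℕ) * c ^ 2) := by push_cast; ring

theorem isProbabilityMeasure_occ (n m : ℕ) [NeZero m] : IsProbabilityMeasure (occ n m) := by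
  constructor
  rw [occ, Measure.smul_apply, Measure.count_apply_finite _ Set.finite_univ]
  simp only [Set.Finite.toFinset_univ, Finset.card_univ, smul_eq_mul]
  exact ENNReal.inv_mul_cancel (by simp [NeZero.ne m]) (ENNReal.natCast_ne_top _)

/-- The Efron–Stein bound for functions of the balls with bounded differences. -/
theorem variance_occ_le_of_bounded_diff (n m : ℕ) [NeZero m] (c : ℝ) (f : (Fin n → Fin m) → ℝ)
    (hf : ∀ (ω : Fin n → Fin m) (b : Fin n) (x : Fin m),
      |f (Function.update ω b x) - f ω| ≤ c) :
    variance f (occ n m) ≤ n * c ^ 2 := by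
  have := isProbabilityMeasure_occ n m
  obtain ⟨a, ha⟩ := exists_sum_sq_sub_le_of_bounded_diff n c f hf
  have hm : (0 : ℝ) < m := by exact_mod_cast NeZero.pos m
  calc variance f (occ n m) = variance (fun ω => f ω - a) (occ n m) :=
        (variance_sub_const (Measurable.of_discrete).aestronglyMeasurable a).symm
    _ ≤ ∫ ω, (f ω - a) ^ 2 ∂(occ n m) :=
        variance_le_expectation_sq (Measurable.of_discrete).aestronglyMeasurable
    _ = ((m : ℝ) ^ n)⁻¹ * ∑ ω, (f ω - a) ^ 2 := by
        rw [occ, integral_smul_measure, integral_count]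
        simp
    _ ≤ n * c ^ 2 := by
        rw [inv_mul_le_iff₀ (by positivity)]
        simpa using ha

theorem ballCount_update_of_ne {n m : ℕ} (ω : Fin n → Fin m) (b : Fin n) (x i : Fin m)
    (hx : i ≠ x) (hb : i ≠ ω b) : ballCount (Function.update ω b x) i = ballCount ω i := by
  unfold ballCount
  congr 1
  ext b'
  by_cases h : b' = b
  · subst h; simp [hx.symm, hb.symm]
  · simp [h]

theorem bTerm_nonneg (d n m : ℕ) (ω : Fin n → Fin m) (i j : Fin m) : 0 ≤ bTerm d n m ω i j := by
  unfold bTerm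
  split_ifs <;> positivity

theorem bTerm_le (d n m : ℕ) (hd : 0 < d) (hn : 4 * d ≤ n) (ω : Fin n → Fin m) (i j : Fin m) :
    bTerm d n m ω i j ≤ (8 ^ d * (2 * d).factorial : ℝ) / n := by
  unfold bTerm
  split_ifs with h
  swap
  · positivity
  obtain ⟨h₁, h₂⟩ := h
  set k := ballCount ω i
  set l := ballCount ω j
  have hnpos : (0 : ℝ) < n := by exact_mod_cast (by omega : 0 < n)
  have hnum : ((n - d).choose d : ℝ) ≤ (n : ℝ) ^ d := by
    exact_mod_cast (Nat.choose_le_pow _ _).trans (Nat.pow_le_pow_left (Nat.sub_le n d) d)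
  have hmid : ((d - k).choose (l - d) : ℝ) ≤ (2 : ℝ) ^ d := by
    exact_mod_cast (Nat.choose_le_two_pow _ _).trans
      (Nat.pow_le_pow_right two_pos (Nat.sub_le d k))
  have hden : (n : ℝ) ^ l ≤ 2 ^ l * ((2 * d).factorial * ((n - k).choose l : ℝ)) := by
    have h : n ^ l ≤ 2 ^ l * ((2 * d).factorial * (n - k).choose l) :=
      calc n ^ l ≤ (2 * (n - k + 1 - l)) ^ l := Nat.pow_le_pow_left (by omega) l
        _ = 2 ^ l * (n - k + 1 - l) ^ l := mul_pow _ _ _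
        _ ≤ 2 ^ l * (n - k).descFactorial l := by
            gcongr; exact Nat.pow_sub_le_descFactorial _ _
        _ = 2 ^ l * (l.factorial * (n - k).choose l) := by
            rw [Nat.descFactorial_eq_factorial_mul_choose]
        _ ≤ _ := by gcongr; omega
    exact_mod_cast h
  have hchoose : (0 : ℝ) < ((n - k).choose l : ℝ) := by
    exact_mod_cast Nat.choose_pos (by omega)
  rw [div_le_div_iff₀ hchoose hnpos]
  calc ((n - d).choose d : ℝ) * ((d - k).choose (l - d) : ℝ) * n
      ≤ (n : ℝ) ^ d * 2 ^ d * n := by gcongr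
    _ = 2 ^ d * (n : ℝ) ^ (d + 1) := by ring
    _ ≤ 2 ^ d * (n : ℝ) ^ l := by
        gcongr
        · exact_mod_cast (by omega : 1 ≤ n)
        · omega
    _ ≤ 2 ^ d * (2 ^ l * ((2 * d).factorial * ((n - k).choose l : ℝ))) := by gcongr
    _ ≤ 2 ^ d * (2 ^ (2 * d) * ((2 * d).factorial * ((n - k).choose l : ℝ))) := by
        gcongr
        · norm_num
        · omega
    _ = 8 ^ d * (2 * d).factorial * ((n - k).choose l : ℝ) := by
        rw [show (8 : ℝ) = 2 * 2 ^ 2 by norm_num, mul_pow, ← pow_mul]; ring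

/-- A sum of terms in `[0, K]` over ordered pairs of distinct urns, each depending only on the
occupancies of the two urns, changes by at most `4 m K` when one ball is moved. -/
theorem abs_sum_update_sub_le {n m : ℕ} (K : ℝ) (t : (Fin n → Fin m) → Fin m → Fin m → ℝ)
    (h₀ : ∀ ω i j, 0 ≤ t ω i j) (h₁ : ∀ ω i j, t ω i j ≤ K)
    (ht : ∀ ω ω' i j, ballCount ω i = ballCount ω' i → ballCount ω j = ballCount ω' j →
      t ω i j = t ω' i j) (ω : Fin n → Fin m) (b : Fin n) (x : Fin m) :
    |(∑ i, ∑ j, if i ≠ j then t (Function.update ω b x) i j else 0)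
      - ∑ i, ∑ j, if i ≠ j then t ω i j else 0| ≤ 4 * m * K := by
  have hK : 0 ≤ K := (h₀ ω x x).trans (h₁ ω x x)
  let hit : Fin m → ℝ := fun i => (if i = x then K else 0) + (if i = ω b then K else 0)
  have hhit (i : Fin m) : 0 ≤ hit i := by simp only [hit]; split_ifs <;> linarith
  have hle {i : Fin m} (h : ¬(i ≠ x ∧ i ≠ ω b)) : K ≤ hit i := by
    simp only [hit]
    split_ifs <;> first | linarith | tauto
  have hterm (i j : Fin m) :
      |(if i ≠ j then t (Function.update ω b x) i j else 0) - (if i ≠ j then t ω i j else 0)|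
        ≤ hit i + hit j := by
    have hi := hhit i
    have hj := hhit j
    split_ifs
    swap
    · simpa using add_nonneg hi hj
    have hdiff : |t (Function.update ω b x) i j - t ω i j| ≤ K :=
      abs_sub_le_of_nonneg_of_le (h₀ _ i j) (h₁ _ i j) (h₀ _ i j) (h₁ _ i j)
    by_cases hit_i : i ≠ x ∧ i ≠ ω b
    · by_cases hit_j : j ≠ x ∧ j ≠ ω b
      · rw [ht _ ω i j (ballCount_update_of_ne ω b x i hit_i.1 hit_i.2)
          (ballCount_update_of_ne ω b x j hit_j.1 hit_j.2)]
        simpa using add_nonneg hi hj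
      · linarith [hle hit_j]
    · linarith [hle hit_i]
  simp only [← Finset.sum_sub_distrib]
  calc _ ≤ ∑ i, ∑ j, (hit i + hit j) :=
        (Finset.abs_sum_le_sum_abs _ _).trans <| Finset.sum_le_sum fun i _ =>
          (Finset.abs_sum_le_sum_abs _ _).trans <| Finset.sum_le_sum fun j _ => hterm i j
    _ = 4 * m * K := by
        simp [hit, Finset.sum_add_distrib]
        ring

/-- Lemma 3.3, bound (3.15): `Var(Σ_{i≠j} b_{n,m}(i,j)) ≤ C·m²/n`. -/
theorem variance_bTerm_sum_le (d : ℕ) (hd : 2 ≤ d) :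
    ∃ (n₁ : ℕ) (r₁ C : ℝ), 0 < r₁ ∧ 0 < C ∧
      ∀ n m : ℕ, n₁ ≤ n → 2 ≤ m → r₁ ≤ occR d n m →
        variance (fun ω : Fin n → Fin m =>
            ∑ i : Fin m, ∑ j : Fin m, if i ≠ j then bTerm d n m ω i j else 0)
          (occ n m)
        ≤ C * (m : ℝ) ^ 2 / n := by
  set K : ℝ := 8 ^ d * (2 * d).factorial
  have hKpos : 0 < K := by positivity
  refine ⟨4 * d, 1, 16 * K ^ 2, one_pos, by positivity, fun n m hn hm _ => ?_⟩
  have : NeZero m := ⟨by omega⟩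
  have hnpos : (0 : ℝ) < n := by exact_mod_cast (by omega : 0 < n)
  refine (variance_occ_le_of_bounded_diff n m (4 * m * (K / n)) _ <|
    abs_sum_update_sub_le (K / n) (bTerm d n m) (bTerm_nonneg d n m)
      (bTerm_le d n m (by omega) hn) fun ω ω' i j hi hj => ?_).trans (le_of_eq ?_)
  · simp only [bTerm, hi, hj]
  · field_simp
    ring
end

section
/- Let k, x, ℓ be nonnegative integers with 0 ≤ x ≤ k − ℓ, and let p ∈ (0,1]. Then C(k, x+ℓ)·p^x ≤ 2^k always, and if in addition k ≤ (ℓ+1)/p + ℓ, then C(k, x+ℓ)·p^x ≤ C(k, ℓ). -/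
/-- Consecutive binomial coefficients satisfy `C(k, m+1)·p ≤ C(k, m)` as soon as
`(k - m)·p ≤ m + 1`. -/
theorem choose_succ_mul_le {k m : ℕ} {p : ℝ} (hm : m ≤ k)
    (hkm : ((k : ℝ) - m) * p ≤ m + 1) :
    (k.choose (m + 1) : ℝ) * p ≤ k.choose m := by
  have hrec : (k.choose (m + 1) : ℝ) * (m + 1) = k.choose m * ((k : ℝ) - m) := by
    rw [← Nat.cast_sub hm]
    exact_mod_cast Nat.choose_succ_right_eq k m
  have hpos : (0 : ℝ) < m + 1 := by positivity
  refine le_of_mul_le_mul_right ?_ hpos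
  calc (k.choose (m + 1) : ℝ) * p * (m + 1)
      = k.choose m * (((k : ℝ) - m) * p) := by linear_combination p * hrec
    _ ≤ k.choose m * (m + 1) := by gcongr

/-- The binomial coefficient bound (3.31): for nonnegative integers `x + ℓ ≤ k` and
`p ∈ (0,1]`, `C(k, x+ℓ)·p^x ≤ 2^k` always, and `C(k, x+ℓ)·p^x ≤ C(k, ℓ)` when
`k ≤ (ℓ+1)/p + ℓ`. -/
theorem choose_mul_pow_le (k x ℓ : ℕ) (h : x + ℓ ≤ k) (p : ℝ) (hp : 0 < p)
    (hp1 : p ≤ 1) :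
    (k.choose (x + ℓ) : ℝ) * p ^ x ≤ 2 ^ k ∧
      ((k : ℝ) ≤ ((ℓ : ℝ) + 1) / p + ℓ →
        (k.choose (x + ℓ) : ℝ) * p ^ x ≤ (k.choose ℓ : ℝ)) := by
  refine ⟨?_, fun hk => ?_⟩
  · calc (k.choose (x + ℓ) : ℝ) * p ^ x
        ≤ k.choose (x + ℓ) * 1 := by gcongr; exact pow_le_one₀ hp.le hp1
      _ ≤ 2 ^ k := by rw [mul_one]; exact_mod_cast Nat.choose_le_two_pow k (x + ℓ)
  · have hkp : ((k : ℝ) - ℓ) * p ≤ ℓ + 1 := by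
      rw [← le_div_iff₀ hp]
      linarith
    induction x with
    | zero => simp
    | succ x ih =>
      have hstep : (k.choose (x + ℓ + 1) : ℝ) * p ≤ k.choose (x + ℓ) := by
        refine choose_succ_mul_le (by omega) ?_
        push_cast
        have hx : (0 : ℝ) ≤ x := x.cast_nonneg
        linarith [mul_nonneg hx hp.le]
      calc (k.choose (x + 1 + ℓ) : ℝ) * p ^ (x + 1)
          = k.choose (x + ℓ + 1) * p * p ^ x := by rw [Nat.add_right_comm]; ring
        _ ≤ k.choose (x + ℓ) * p ^ x := by gcongr
        _ ≤ k.choose ℓ := ih (by omega)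
end

section
/- Let d ≥ 2 be an integer. There exists an integer n₁, depending only on d, such that for all integers n ≥ n₁, all integers m ≥ 3 satisfying n/m ≤ 2 log m, and every integer l with 0 ≤ l ≤ ⌈√n⌉ and n − l ≥ d, the means of the uniform occupancy model satisfy μ_{n,m} ≤ 18·μ_{n−l, m−1}. -/
open MeasureTheory ProbabilityTheory

/-- The number of allocations putting exactly `d` of the `n` balls into urn `i`. -/
theorem card_ballCount_eq (d n m : ℕ) (i : Fin m) :
    (Finset.univ.filter fun ω : Fin n → Fin m => ballCount ω i = d).card
      = n.choose d * (m - 1) ^ (n - d) := by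
  have h : ∀ S ∈ Finset.powersetCard d (Finset.univ : Finset (Fin n)),
      ((Finset.univ.filter fun ω : Fin n → Fin m => ballCount ω i = d).filter
        fun ω => (Finset.univ.filter fun b => ω b = i) = S).card = (m - 1) ^ (n - d) := by
    intro S hS
    have hS' : S.card = d := (Finset.mem_powersetCard.mp hS).2
    have he : ((Finset.univ.filter fun ω : Fin n → Fin m => ballCount ω i = d).filter
        fun ω => (Finset.univ.filter fun b => ω b = i) = S)
        = Fintype.piFinset (fun b => if b ∈ S then {i} else Finset.univ.erase i) := by
      ext ω
      simp only [Finset.mem_filter, Finset.mem_univ, true_and, Fintype.mem_piFinset]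
      constructor
      · rintro ⟨-, hω⟩ b
        have hb : b ∈ S ↔ ω b = i := by simp [← hω]
        by_cases hbS : b ∈ S
        · simp [hbS, hb.mp hbS]
        · simp [hbS, mt hb.mpr hbS]
      · intro hω
        have hfib : (Finset.univ.filter fun b => ω b = i) = S := by
          ext b
          have hb := hω b
          by_cases hbS : b ∈ S <;> simp_all
        exact ⟨by rw [ballCount, hfib, hS'], hfib⟩
    rw [he, Fintype.card_piFinset]
    simp only [apply_ite Finset.card, Finset.card_singleton,
      Finset.card_erase_of_mem (Finset.mem_univ _), Finset.card_univ, Fintype.card_fin]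
    rw [Finset.prod_ite, Finset.prod_const_one, Finset.prod_const, one_mul,
      Finset.filter_not, Finset.filter_mem_eq_inter, Finset.univ_inter,
      Finset.card_sdiff_of_subset (Finset.subset_univ _), hS', Finset.card_univ,
      Fintype.card_fin]
  rw [Finset.card_eq_sum_card_fiberwise
    (f := fun ω : Fin n → Fin m => Finset.univ.filter fun b => ω b = i)
    (t := Finset.powersetCard d Finset.univ), Finset.sum_congr rfl h]
  · simp
  · intro ω hω
    exact Finset.mem_powersetCard.mpr ⟨Finset.subset_univ _, (Finset.mem_filter.mp hω).2⟩

/-- The closed form of the mean number of urns containing exactly `d` balls. -/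
theorem occMean_eq (d n m : ℕ) :
    occMean d n m = m * (n.choose d * ((m - 1 : ℕ) : ℝ) ^ (n - d)) / (m : ℝ) ^ n := by
  have hsum : ∑ ω : Fin n → Fin m, urnCount d ω
      = m * (n.choose d * (m - 1) ^ (n - d)) := by
    simp only [urnCount, Finset.card_filter]
    rw [Finset.sum_comm]
    simp only [← Finset.card_filter, card_ballCount_eq]
    simp
  rw [occMean, occ, integral_smul_measure, integral_count, ← Nat.cast_sum, hsum]
  simp [div_eq_inv_mul]

/-- Removing a bounded fraction of `n` changes the binomial coefficient by at most a
factor two. -/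
theorem choose_le_two_mul_choose_sub {d n l : ℕ} (h : 2 * d * (l + d) ≤ n) (hd : 1 ≤ d) :
    n.choose d ≤ 2 * (n - l).choose d := by
  have hln : l + d ≤ n := by nlinarith
  have hn : (0 : ℝ) < n := by exact_mod_cast (by omega : 0 < n)
  have hR : (2 * d * (l + d) : ℝ) ≤ n := by exact_mod_cast h
  have hlnR : (l + d : ℝ) ≤ n := by exact_mod_cast hln
  have hb := one_add_mul_le_pow (a := -((l + d : ℝ) / n))
    (by linarith [(div_le_one hn).mpr hlnR]) d
  have hq : d * ((l + d : ℝ) / n) ≤ 1 / 2 := by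
    rw [← mul_div_assoc, div_le_iff₀ hn]; linarith
  have hp : (n : ℝ) ^ d ≤ 2 * ((n - (l + d) : ℕ) : ℝ) ^ d := by
    have he : ((n - (l + d) : ℕ) : ℝ) = n * (1 + -((l + d : ℝ) / n)) := by
      rw [Nat.cast_sub hln]; field_simp; push_cast; ring
    rw [he, mul_pow]
    nlinarith [pow_pos hn d]
  have hpN : n ^ d ≤ 2 * (n - (l + d)) ^ d := by exact_mod_cast hp
  have h1 := Nat.descFactorial_le_pow n d
  have h2 := Nat.pow_sub_le_descFactorial (n - l) d
  have h3 : (n - (l + d)) ^ d ≤ (n - l + 1 - d) ^ d := Nat.pow_le_pow_left (by omega) d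
  rw [Nat.descFactorial_eq_factorial_mul_choose] at h1 h2
  refine Nat.le_of_mul_le_mul_left ?_ (Nat.factorial_pos d)
  linarith

/-- If `N / m ≤ 2 log m` then `((m - 1)² / (m (m - 2))) ^ N ≤ 9`. -/
theorem sq_sub_one_pow_le {m N : ℕ} (hm : 3 ≤ m) (h : (N : ℝ) / m ≤ 2 * Real.log m) :
    (((m : ℝ) - 1) ^ 2) ^ N ≤ 9 * (((m : ℝ) - 2) * m) ^ N := by
  have hmR : (3 : ℝ) ≤ m := by exact_mod_cast hm
  have ha : (0 : ℝ) < m - 2 := by linarith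
  have hP : (0 : ℝ) < ((m : ℝ) - 2) * m := by positivity
  have hlog : Real.log m ≤ ((m : ℝ) - 2) * Real.log 3 := by
    have hpow : (m : ℝ) ≤ 3 ^ (m - 2) := by
      have := one_add_mul_le_pow (a := (2 : ℝ)) (by norm_num) (m - 2)
      rw [Nat.cast_sub (by omega)] at this
      norm_num at this ⊢
      linarith
    have := Real.log_le_log (by linarith) hpow
    rwa [Real.log_pow, Nat.cast_sub (by omega), Nat.cast_ofNat] at this
  have hexp : (N : ℝ) * (1 / (((m : ℝ) - 2) * m)) ≤ 2 * Real.log 3 := by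
    have : (N : ℝ) * (1 / (((m : ℝ) - 2) * m)) = (N : ℝ) / m / (m - 2) := by field_simp
    rw [this, div_le_iff₀ ha]
    linarith
  have hsplit : ((m : ℝ) - 1) ^ 2
      = (((m : ℝ) - 2) * m) * (1 / (((m : ℝ) - 2) * m) + 1) := by
    field_simp; ring
  have hnine : (1 / (((m : ℝ) - 2) * m) + 1) ^ N ≤ 9 := calc
    _ ≤ Real.exp (1 / (((m : ℝ) - 2) * m)) ^ N :=
      pow_le_pow_left₀ (by positivity) (Real.add_one_le_exp _) N
    _ = Real.exp (N * (1 / (((m : ℝ) - 2) * m))) := (Real.exp_nat_mul _ _).symm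
    _ ≤ Real.exp (2 * Real.log 3) := Real.exp_le_exp.mpr hexp
    _ = 9 := by
      rw [two_mul, Real.exp_add, Real.exp_log (by norm_num)]; norm_num
  rw [hsplit, mul_pow, mul_comm (9 : ℝ)]
  exact mul_le_mul_of_nonneg_left hnine (by positivity)

/-- Inequality (3.19): there is `n₁` depending only on `d ≥ 2` such that for all
`n ≥ n₁`, `m ≥ 3` with `n/m ≤ 2 log m`, and all `0 ≤ l ≤ ⌈√n⌉` with `n − l ≥ d`,
`μ_{n,m} ≤ 18·μ_{n−l, m−1}`. -/
theorem occupancy_mean_reduction (d : ℕ) (hd : 2 ≤ d) :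
    ∃ n₁ : ℕ, ∀ n m : ℕ, n₁ ≤ n → 3 ≤ m → (n : ℝ) / m ≤ 2 * Real.log m →
      ∀ l : ℕ, l ≤ ⌈Real.sqrt n⌉₊ → d ≤ n - l →
        occMean d n m ≤ 18 * occMean d (n - l) (m - 1) := by
  refine ⟨(2 * d * (d + 2)) ^ 2, fun n m hn hm hnm l hl hdl => ?_⟩
  have hmR : (3 : ℝ) ≤ m := by exact_mod_cast hm
  have hdR : (2 : ℝ) ≤ d := by exact_mod_cast hd
  have hs : (2 * d * (d + 2) : ℝ) ≤ √n := by
    apply Real.le_sqrt_of_sq_le; exact_mod_cast hn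
  have hlR : (l : ℝ) ≤ √n + 1 :=
    (Nat.cast_le.mpr hl).trans (Nat.ceil_lt_add_one (Real.sqrt_nonneg _)).le
  have hsq : √(n : ℝ) * √n = n := Real.mul_self_sqrt (Nat.cast_nonneg n)
  have hcond : 2 * d * (l + d) ≤ n := by
    have hs1 : 1 ≤ √(n : ℝ) := by nlinarith
    have h1 : (l + d : ℝ) ≤ (d + 2) * √n := by nlinarith
    have h2 : (2 * d * (l + d) : ℝ) ≤ n := calc
      (2 * d * (l + d) : ℝ) ≤ 2 * d * ((d + 2) * √n) := by gcongr
      _ = 2 * d * (d + 2) * √n := by ring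
      _ ≤ √n * √n := by gcongr
      _ = n := hsq
    exact_mod_cast h2
  have hC : (n.choose d : ℝ) ≤ 2 * ((n - l).choose d : ℕ) := by
    exact_mod_cast choose_le_two_mul_choose_sub hcond (by omega)
  obtain ⟨N, hN⟩ : ∃ N, n - l = N + d := ⟨n - l - d, by omega⟩
  obtain ⟨e, rfl⟩ : ∃ e, d = e + 1 := ⟨d - 1, by omega⟩
  have hnN : n = N + l + (e + 1) := by omega
  have hkey := sq_sub_one_pow_le (N := N) hm (le_trans (by gcongr; omega) hnm)
  have hM : ((m - 1 : ℕ) : ℝ) = m - 1 := by rw [Nat.cast_sub (by omega), Nat.cast_one]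
  have ha : ((m - 1 - 1 : ℕ) : ℝ) = m - 2 := by
    rw [Nat.sub_sub, Nat.cast_sub (by omega)]; norm_num
  rw [occMean_eq, occMean_eq, hM, ha, hN, Nat.add_sub_cancel]
  rw [hN] at hC
  rw [show n - (e + 1) = N + l by omega]
  have hM0 : (0 : ℝ) < m - 1 := by linarith
  have ha0 : (0 : ℝ) < m - 2 := by linarith
  have hpow : ((m : ℝ) - 1) ^ (l + e) ≤ (m : ℝ) ^ (l + e) :=
    pow_le_pow_left₀ hM0.le (by linarith) _
  have hprod : (((m : ℝ) - 1) ^ 2) ^ N * ((m : ℝ) - 1) ^ (l + e)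
      ≤ 9 * (((m : ℝ) - 2) * m) ^ N * (m : ℝ) ^ (l + e) :=
    mul_le_mul hkey hpow (by positivity) (by positivity)
  have hratio : (m : ℝ) * ((m : ℝ) - 1) ^ (N + l) / (m : ℝ) ^ n
      ≤ 9 * (((m : ℝ) - 1) * ((m : ℝ) - 2) ^ N / ((m : ℝ) - 1) ^ (N + (e + 1))) := by
    rw [← mul_div_assoc, div_le_div_iff₀ (by positivity) (by positivity), hnN]
    calc _ = (m : ℝ) * (m - 1) * ((((m : ℝ) - 1) ^ 2) ^ N * ((m : ℝ) - 1) ^ (l + e)) := by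
          rw [← pow_mul]; ring
      _ ≤ (m : ℝ) * (m - 1) * (9 * (((m : ℝ) - 2) * m) ^ N * (m : ℝ) ^ (l + e)) := by
          gcongr
      _ = _ := by rw [mul_pow]; ring
  calc _ = (n.choose (e + 1) : ℝ) * ((m : ℝ) * ((m : ℝ) - 1) ^ (N + l) / (m : ℝ) ^ n) := by
        ring
    _ ≤ _ := mul_le_mul hC hratio (by positivity) (by positivity)
    _ = _ := by ring
end
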